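/- arXiv:math/0512175 — 3 statements merged into one kernel-verified Lean document; each statement's English description precedes it below -/
import Mathlib

section
/- Let q be an odd prime. Then there exist polynomials f and g with integer coefficients such that f has degree (q−1)/2, g has degree (q−3)/2 with leading coefficient equal to 1 or −1, and 4·Φ_q(X) = f(X)² − (−1)^{(q−1)/2}·q·g(X)² as polynomials in ℤ[X], where Φ_q(X) = (X^q − 1)/(X − 1) is the q-th cyclotomic polynomial. -/
/-!
Let `ζ` be a primitive `q`-th root of unity in `L = ℚ(ζ)` and `χ` the quadratic character mod `q`.
Put `A = ∏_{χ a = 1} (X - ζ^a)` and `B = ∏_{χ a = -1} (X - ζ^a)`, so that `Φ_q = A B` and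
`4 Φ_q = (A + B)² - (A - B)²`. An automorphism `ζ ↦ ζ^k` of `L` fixes `A` and `B` if `χ k = 1` and
swaps them if `χ k = -1`, while it multiplies the Gauss sum `τ = ∑ χ(a) ζ^a` by `χ k`. Hence
`f = A + B` and `g = (A - B) / τ` have rational coefficients. Those of `f` are algebraic integers,
hence integers. A coefficient `r` of `g` has `τ r` integral, where `τ² = ± q`; thus `± q r² ∈ ℤ`
and `r ∈ ℤ` because `q` is squarefree (`int_of_rat_of_mul_isIntegral`).

Both `A` and `B` are monic of degree `(q - 1) / 2`, so `f` has leading coefficient `2`, and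
the coefficient of `A - B` in degree `(q - 3) / 2` is `-∑_{χ a = 1} ζ^a + ∑_{χ a = -1} ζ^a = -τ`,
so `g` has leading coefficient `-1`.
-/

open Polynomial Finset

namespace GaussIdentity

variable {q : ℕ} [Fact q.Prime] {L : Type*} [Field L]

/-- The product of the factors `X - ψ a` over the `a` mod `q` with quadratic character `ε`. For
`ψ a = ζ^a` and `ε = 1`, `ε = -1` these are the two halves of the cyclotomic polynomial. -/
noncomputable def half (ψ : AddChar (ZMod q) L) (ε : ℤ) : L[X] :=
  ∏ a with quadraticChar (ZMod q) a = ε, (X - C (ψ a))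

/-- The quadratic Gauss sum `∑ χ(a) ψ(a)`. -/
noncomputable def tau (ψ : AddChar (ZMod q) L) : L :=
  gaussSum ((quadraticChar (ZMod q)).ringHomComp (Int.castRingHom L)) ψ

theorem sum_quadraticChar_mul {R : Type*} [CommRing R] (h : ZMod q → R) :
    ∑ a, (quadraticChar (ZMod q) a : R) * h a =
      ∑ a with quadraticChar (ZMod q) a = 1, h a -
        ∑ a with quadraticChar (ZMod q) a = -1, h a := by
  rw [sum_filter, sum_filter, ← sum_sub_distrib]
  refine sum_congr rfl fun a _ => ?_
  rcases quadraticChar_isQuadratic (ZMod q) a with h | h | h <;> simp [h]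

theorem tau_eq (ψ : AddChar (ZMod q) L) :
    tau ψ = ∑ a with quadraticChar (ZMod q) a = 1, ψ a -
        ∑ a with quadraticChar (ZMod q) a = -1, ψ a :=
  sum_quadraticChar_mul ψ

theorem ringChar_ne_two (hodd : Odd q) : ringChar (ZMod q) ≠ 2 := by
  rw [ZMod.ringChar_zmod_n]
  rintro rfl
  exact absurd hodd (by decide)

theorem disjoint_filter_quadraticChar :
    Disjoint (univ.filter fun a : ZMod q => quadraticChar (ZMod q) a = 1)
      (univ.filter fun a : ZMod q => quadraticChar (ZMod q) a = -1) := by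
  rw [disjoint_filter]
  intro a _ h h'
  rw [h] at h'
  exact absurd h' (by decide)

theorem filter_union_filter_quadraticChar :
    (univ.filter fun a : ZMod q => quadraticChar (ZMod q) a = 1) ∪
      (univ.filter fun a : ZMod q => quadraticChar (ZMod q) a = -1) = univ.erase 0 := by
  ext a
  simp only [mem_union, mem_filter, mem_univ, true_and, mem_erase, and_true]
  refine ⟨?_, fun h => quadraticChar_dichotomy h⟩
  rintro h rfl
  simp at h

theorem card_filter_quadraticChar (hodd : Odd q) {ε : ℤ} (hε : ε = 1 ∨ ε = -1) :
    #{a : ZMod q | quadraticChar (ZMod q) a = ε} = (q - 1) / 2 := by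
  have h1 := sum_quadraticChar_mul (q := q) (R := ℤ) fun _ => 1
  have h2 := quadraticChar_sum_zero (ringChar_ne_two hodd)
  have h3 := card_union_of_disjoint (disjoint_filter_quadraticChar (q := q))
  rw [filter_union_filter_quadraticChar, card_erase_of_mem (mem_univ _), card_univ,
    ZMod.card] at h3
  simp only [mul_one, Int.cast_id, sum_const, nsmul_eq_mul] at h1
  rw [h2] at h1
  rcases hε with rfl | rfl <;> omega

theorem half_monic (ψ : AddChar (ZMod q) L) (ε : ℤ) : (half ψ ε).Monic :=
  monic_prod_of_monic _ _ fun _ _ => monic_X_sub_C _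

theorem natDegree_half (hodd : Odd q) (ψ : AddChar (ZMod q) L) {ε : ℤ} (hε : ε = 1 ∨ ε = -1) :
    (half ψ ε).natDegree = (q - 1) / 2 := by
  rw [half, natDegree_prod_of_monic _ _ fun _ _ => monic_X_sub_C _]
  simp only [natDegree_X_sub_C, sum_const, smul_eq_mul, mul_one]
  exact card_filter_quadraticChar hodd hε

theorem three_le (hodd : Odd q) : 3 ≤ q := by
  have := (Fact.out : q.Prime).two_le
  obtain ⟨k, rfl⟩ := hodd
  omega

theorem half_coeff_pred (hodd : Odd q) (ψ : AddChar (ZMod q) L) {ε : ℤ} (hε : ε = 1 ∨ ε = -1) :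
    (half ψ ε).coeff ((q - 3) / 2) = -∑ a with quadraticChar (ZMod q) a = ε, ψ a := by
  have hc := card_filter_quadraticChar (q := q) hodd hε
  have h3 := three_le hodd
  have := prod_X_sub_C_coeff_card_pred {a : ZMod q | quadraticChar (ZMod q) a = ε} (fun a => ψ a)
    (by omega)
  rw [← this, half]
  congr 1
  omega

theorem half_mul_half {ζ : L} (hζ : IsPrimitiveRoot ζ q) :
    half (AddChar.zmodChar q hζ.pow_eq_one) 1 * half (AddChar.zmodChar q hζ.pow_eq_one) (-1) =
      cyclotomic q L := by
  have hq : q.Prime := Fact.out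
  rw [half, half, ← prod_union disjoint_filter_quadraticChar, filter_union_filter_quadraticChar,
    cyclotomic_eq_prod_X_sub_primitiveRoots hζ]
  refine prod_bij (fun a _ => AddChar.zmodChar q hζ.pow_eq_one a) ?_ ?_ ?_ fun _ _ => rfl
  · intro a ha
    rw [mem_primitiveRoots hq.pos, AddChar.zmodChar_apply]
    refine hζ.pow_of_coprime _ (Nat.Coprime.symm ((Nat.Prime.coprime_iff_not_dvd hq).2 fun h => ?_))
    have := Nat.eq_zero_of_dvd_of_lt h (ZMod.val_lt a)
    simp_all
  · intro a _ b _ h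
    rw [AddChar.zmodChar_apply, AddChar.zmodChar_apply] at h
    exact ZMod.val_injective q (hζ.pow_inj (ZMod.val_lt a) (ZMod.val_lt b) h)
  · intro x hx
    rw [mem_primitiveRoots hq.pos] at hx
    obtain ⟨i, hi, rfl⟩ := hζ.eq_pow_of_pow_eq_one hx.pow_eq_one
    refine ⟨(i : ZMod q), ?_, AddChar.zmodChar_apply' _ _⟩
    simp only [mem_erase, mem_univ, and_true]
    intro h0
    rw [ZMod.natCast_eq_zero_iff] at h0
    have := Nat.eq_zero_of_dvd_of_lt h0 hi
    subst this
    rw [pow_zero] at hx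
    exact hq.one_lt.ne' (hx.unique IsPrimitiveRoot.one)

theorem tau_sq [CharZero L] (hodd : Odd q) {ψ : AddChar (ZMod q) L} (hψ : ψ.IsPrimitive) :
    tau ψ ^ 2 = (((-1) ^ ((q - 1) / 2) * q : ℤ) : L) := by
  have h2 := ringChar_ne_two hodd
  have hi : Function.Injective (Int.castRingHom L) := Int.cast_injective
  rw [tau, gaussSum_sq ((MulChar.ringHomComp_ne_one_iff hi).2 (quadraticChar_ne_one h2))
    ((quadraticChar_isQuadratic _).comp _) hψ, MulChar.ringHomComp_apply,
    quadraticChar_neg_one h2, ZMod.card,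
    ZMod.χ₄_eq_neg_one_pow (Nat.odd_iff.1 hodd)]
  have : q / 2 = (q - 1) / 2 := by
    obtain ⟨k, rfl⟩ := hodd
    omega
  simp [this]

/-- An endomorphism acting on the values of `ψ` as multiplication by `k` on the argument sends
each half to the half of sign `χ k * ε`. -/
theorem half_map (σ : L →+* L) (ψ : AddChar (ZMod q) L) {k : ZMod q} (hk : k ≠ 0)
    (hσ : ∀ a, σ (ψ a) = ψ (k * a)) (ε : ℤ) :
    (half ψ ε).map σ = half ψ (quadraticChar (ZMod q) k * ε) := by
  rw [half, Polynomial.map_prod, half]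
  have hs := quadraticChar_sq_one hk
  refine prod_bij (fun a _ => k * a) ?_ ?_ ?_ ?_
  · intro a ha
    simp only [mem_filter, mem_univ, true_and] at ha ⊢
    rw [map_mul, ha]
  · intro a _ b _ h
    exact mul_left_cancel₀ hk h
  · intro b hb
    simp only [mem_filter, mem_univ, true_and] at hb
    refine ⟨k⁻¹ * b, ?_, mul_inv_cancel_left₀ hk b⟩
    simp only [mem_filter, mem_univ, true_and]
    have : quadraticChar (ZMod q) b =
        quadraticChar (ZMod q) k * quadraticChar (ZMod q) (k⁻¹ * b) := by
      rw [← map_mul, mul_inv_cancel_left₀ hk]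
    rw [hb] at this
    exact (mul_left_cancel₀ (by rintro h; simp [h] at hs) this).symm
  · intro a _
    simp [hσ]

theorem tau_map (σ : L →+* L) (ψ : AddChar (ZMod q) L) {k : ZMod q} (hk : k ≠ 0)
    (hσ : ∀ a, σ (ψ a) = ψ (k * a)) :
    σ (tau ψ) = (quadraticChar (ZMod q) k : L) * tau ψ := by
  have h := gaussSum_mulShift ((quadraticChar (ZMod q)).ringHomComp (Int.castRingHom L)) ψ
    (Units.mk0 k hk)
  have h1 : σ (tau ψ) = gaussSum ((quadraticChar (ZMod q)).ringHomComp (Int.castRingHom L))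
      (ψ.mulShift k) := by
    simp [tau, gaussSum, hσ, AddChar.mulShift_apply]
  have hs : (quadraticChar (ZMod q) k : L) * (quadraticChar (ZMod q) k : L) = 1 := by
    rw [← sq]
    exact_mod_cast congrArg (Int.cast : ℤ → L) (quadraticChar_sq_one hk)
  rw [h1, tau, ← h, Units.val_mk0, MulChar.ringHomComp_apply, eq_intCast, ← mul_assoc, hs, one_mul]

theorem isIntegral_zmodChar {ζ : L} (h : ζ ^ q = 1) (a : ZMod q) :
    IsIntegral ℤ (AddChar.zmodChar q h a) := by
  rw [AddChar.zmodChar_apply]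
  refine IsIntegral.pow (IsIntegral.of_pow (Fact.out : q.Prime).pos ?_) _
  rw [h]
  exact isIntegral_one

theorem isIntegral_half_coeff {ψ : AddChar (ZMod q) L} (h : ∀ a, IsIntegral ℤ (ψ a)) (ε : ℤ)
    (n : ℕ) : IsIntegral ℤ ((half ψ ε).coeff n) := by
  have : half ψ ε ∈ lifts (algebraMap (integralClosure ℤ L) L) := by
    refine prod_mem fun a _ => ?_
    rw [lifts_iff_set_range]
    exact ⟨X - C ⟨ψ a, h a⟩, by simp⟩
  rw [lifts_iff_coeff_lifts] at this
  obtain ⟨x, hx⟩ := this n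
  rw [← hx]
  exact x.2

theorem isIntegral_tau {ψ : AddChar (ZMod q) L} (h : ∀ a, IsIntegral ℤ (ψ a)) :
    IsIntegral ℤ (tau ψ) := by
  rw [tau_eq]
  exact (IsIntegral.sum _ fun a _ => h a).sub (IsIntegral.sum _ fun a _ => h a)

theorem int_of_rat_of_isIntegral [CharZero L] {x : L} (hx : x ∈ Set.range (algebraMap ℚ L))
    (hi : IsIntegral ℤ x) : ∃ n : ℤ, (n : L) = x := by
  obtain ⟨r, rfl⟩ := hx
  rw [isIntegral_algebraMap_iff (algebraMap ℚ L).injective, IsIntegrallyClosed.isIntegral_iff] at hi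
  obtain ⟨n, rfl⟩ := hi
  exact ⟨n, by simp⟩

/-- If `t² = ± q` with `t` integral, a rational `x` with `t x` integral is an integer:
`m = ± q x` is an integer whose square is divisible by `q`. -/
theorem int_of_rat_of_mul_isIntegral [CharZero L] {t x : L} {e : ℤ} (he : e = 1 ∨ e = -1)
    (ht : t ^ 2 = ((e * q : ℤ) : L)) (hti : IsIntegral ℤ t)
    (hx : x ∈ Set.range (algebraMap ℚ L)) (hi : IsIntegral ℤ (t * x)) : ∃ n : ℤ, (n : L) = x := by
  have hq : q.Prime := Fact.out
  obtain ⟨r, rfl⟩ := hx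
  have hq0 : (q : L) ≠ 0 := by exact_mod_cast hq.ne_zero
  obtain ⟨m, hm⟩ := int_of_rat_of_isIntegral (x := t * (t * algebraMap ℚ L r))
    ⟨e * q * r, by rw [← mul_assoc, ← sq, ht]; simp⟩ (hti.mul hi)
  obtain ⟨n, hn⟩ := int_of_rat_of_isIntegral (x := (t * algebraMap ℚ L r) ^ 2)
    ⟨e * q * r ^ 2, by rw [mul_pow, ht]; simp⟩ (hi.pow 2)
  have hmn : m ^ 2 = e * q * n := by
    have : ((m ^ 2 : ℤ) : L) = ((e * q * n : ℤ) : L) := by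
      rw [Int.cast_mul _ n, ← ht, hn, Int.cast_pow, hm]
      ring
    exact_mod_cast this
  have hd : (q : ℤ) ∣ m :=
    (Nat.prime_iff_prime_int.1 hq).dvd_of_dvd_pow (n := 2) ⟨e * n, by rw [hmn]; ring⟩
  obtain ⟨s, rfl⟩ := hd
  rw [← mul_assoc, ← sq, ht] at hm
  push_cast at hm
  refine ⟨e * s, ?_⟩
  apply mul_left_cancel₀ hq0
  rcases he with rfl | rfl
  · simpa using hm
  · push_cast at hm ⊢
    linear_combination -hm

/-- Every endomorphism of a field containing `ζ` acts on the powers of `ζ` as `ζ ↦ ζ^k` for some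
`k` prime to `q`. -/
theorem exists_zmodChar_map {ζ : L} (hζ : IsPrimitiveRoot ζ q) (σ : L →+* L) :
    ∃ k : ZMod q, k ≠ 0 ∧ ∀ a, σ (AddChar.zmodChar q hζ.pow_eq_one a) =
      AddChar.zmodChar q hζ.pow_eq_one (k * a) := by
  have hq : q.Prime := Fact.out
  obtain ⟨i, hi, h⟩ := hζ.eq_pow_of_pow_eq_one
    (show σ ζ ^ q = 1 by rw [← map_pow, hζ.pow_eq_one, map_one])
  refine ⟨i, fun h0 => ?_, fun a => ?_⟩
  · rw [ZMod.natCast_eq_zero_iff] at h0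
    have := Nat.eq_zero_of_dvd_of_lt h0 hi
    subst this
    rw [pow_zero, ← map_one σ] at h
    exact hζ.ne_one hq.one_lt (σ.injective h).symm
  · have : (i : ZMod q) * a = ((i * a.val : ℕ) : ZMod q) := by simp
    rw [this, AddChar.zmodChar_apply', AddChar.zmodChar_apply, map_pow, ← h, pow_mul]

end GaussIdentity

open GaussIdentity in
/-- **Gauss's identity.** For an odd prime `q` there are integer polynomials `f` of degree
`(q−1)/2` and `g` of degree `(q−3)/2` with leading coefficient `±1` such that
`4·Φ_q(X) = f(X)² − (−1)^{(q−1)/2}·q·g(X)²`. -/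
theorem sum_of_divisors_stmt9
    (q : ℕ) (hq : q.Prime) (hodd : Odd q) :
    ∃ f g : Polynomial ℤ,
      f.natDegree = (q - 1) / 2 ∧
      g.natDegree = (q - 3) / 2 ∧
      (g.leadingCoeff = 1 ∨ g.leadingCoeff = -1) ∧
      4 * Polynomial.cyclotomic q ℤ =
        f ^ 2 - Polynomial.C ((-1 : ℤ) ^ ((q - 1) / 2) * (q : ℤ)) * g ^ 2 := by
  have : Fact q.Prime := ⟨hq⟩
  let L := CyclotomicField q ℚ
  have : NeZero (q : ℚ) := ⟨by exact_mod_cast hq.ne_zero⟩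
  have : IsCyclotomicExtension {q} ℚ L := CyclotomicField.isCyclotomicExtension q ℚ
  have : IsGalois ℚ L := IsCyclotomicExtension.isGalois {q} ℚ L
  have hζ : IsPrimitiveRoot (IsCyclotomicExtension.zeta q ℚ L) q :=
    IsCyclotomicExtension.zeta_spec q ℚ L
  set ψ : AddChar (ZMod q) L := AddChar.zmodChar q hζ.pow_eq_one with hψ
  have hprim : ψ.IsPrimitive := AddChar.zmodChar_primitive_of_primitive_root q hζ
  have hint : ∀ a, IsIntegral ℤ (ψ a) := isIntegral_zmodChar hζ.pow_eq_one
  have hmul : half ψ 1 * half ψ (-1) = cyclotomic q L := half_mul_half hζ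
  have hτ := tau_sq hodd hprim
  have hτ0 : tau ψ ≠ 0 := by
    intro h
    rw [h, zero_pow two_ne_zero, eq_comm, Int.cast_eq_zero] at hτ
    simp [hq.ne_zero] at hτ
  have hinj : Function.Injective (Int.castRingHom L) := Int.cast_injective
  have h3 := three_le hodd
  -- The action of an automorphism on the two halves and on the Gauss sum.
  have hact : ∀ σ : Gal(L/ℚ),
      ((half ψ 1).map (σ : L →+* L) = half ψ 1 ∧
        (half ψ (-1)).map (σ : L →+* L) = half ψ (-1) ∧ σ (tau ψ) = tau ψ) ∨
      ((half ψ 1).map (σ : L →+* L) = half ψ (-1) ∧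
        (half ψ (-1)).map (σ : L →+* L) = half ψ 1 ∧ σ (tau ψ) = -tau ψ) := by
    intro σ
    obtain ⟨k, hk, hσ⟩ := exists_zmodChar_map hζ (σ : L →+* L)
    have h1 := half_map (σ : L →+* L) ψ hk hσ 1
    have h2 := half_map (σ : L →+* L) ψ hk hσ (-1)
    have h3 : σ (tau ψ) = _ := tau_map (σ : L →+* L) ψ hk hσ
    rcases quadraticChar_dichotomy hk with h | h
    · left
      rw [h] at h1 h2 h3
      exact ⟨by simpa using h1, by simpa using h2, by simpa using h3⟩
    · right
      rw [h] at h1 h2 h3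
      rw [Int.cast_neg, Int.cast_one, neg_one_mul] at h3
      exact ⟨by simpa using h1, by simpa using h2, h3⟩
  have hcoe : ∀ (σ : Gal(L/ℚ)) (p : L[X]) n, σ (p.coeff n) = (p.map (σ : L →+* L)).coeff n := by
    intro σ p n
    rw [coeff_map]
    rfl
  have hf : half ψ 1 + half ψ (-1) ∈ lifts (Int.castRingHom L) := by
    rw [lifts_iff_coeff_lifts]
    intro n
    refine int_of_rat_of_isIntegral ((IsGalois.mem_range_algebraMap_iff_fixed _).2 fun σ => ?_) ?_
    · rw [hcoe, Polynomial.map_add]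
      rcases hact σ with ⟨h1, h2, -⟩ | ⟨h1, h2, -⟩
      · rw [h1, h2]
      · rw [h1, h2, add_comm]
    · rw [coeff_add]
      exact (isIntegral_half_coeff hint _ _).add (isIntegral_half_coeff hint _ _)
  have hg : C (tau ψ)⁻¹ * (half ψ 1 - half ψ (-1)) ∈ lifts (Int.castRingHom L) := by
    rw [lifts_iff_coeff_lifts]
    intro n
    refine int_of_rat_of_mul_isIntegral (neg_one_pow_eq_or ℤ _) hτ (isIntegral_tau hint)
      ((IsGalois.mem_range_algebraMap_iff_fixed _).2 fun σ => ?_) ?_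
    · rw [coeff_C_mul, map_mul, map_inv₀, hcoe, Polynomial.map_sub]
      rcases hact σ with ⟨h1, h2, h3⟩ | ⟨h1, h2, h3⟩
      · rw [h1, h2, h3]
      · rw [h1, h2, h3, coeff_sub, coeff_sub, inv_neg]
        ring
    · rw [coeff_C_mul, mul_inv_cancel_left₀ hτ0, coeff_sub]
      exact (isIntegral_half_coeff hint _ _).sub (isIntegral_half_coeff hint _ _)
  rw [lifts_iff_set_range] at hf hg
  obtain ⟨f, hf⟩ := hf
  obtain ⟨g, hg⟩ := hg
  have hd1 := natDegree_half hodd ψ (Or.inl rfl)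
  have hd2 := natDegree_half hodd ψ (Or.inr rfl)
  have hc1 : (half ψ 1).coeff ((q - 1) / 2) = 1 := by
    rw [← hd1]
    exact half_monic ψ 1
  have hc2 : (half ψ (-1)).coeff ((q - 1) / 2) = 1 := by
    rw [← hd2]
    exact half_monic ψ (-1)
  have hgc : g.coeff ((q - 3) / 2) = -1 := by
    apply hinj
    rw [← coeff_map, hg, coeff_C_mul, coeff_sub, half_coeff_pred hodd ψ (Or.inl rfl),
      half_coeff_pred hodd ψ (Or.inr rfl), ← neg_sub', ← tau_eq, mul_neg, inv_mul_cancel₀ hτ0]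
    simp
  have hgd : g.natDegree = (q - 3) / 2 := by
    refine natDegree_eq_of_le_of_coeff_ne_zero ?_ (by rw [hgc]; decide)
    rw [natDegree_le_iff_coeff_eq_zero]
    intro n hn
    apply hinj
    rw [← coeff_map, hg, coeff_C_mul, coeff_sub, map_zero]
    rcases (show (q - 1) / 2 ≤ n by omega).eq_or_lt with rfl | hlt
    · rw [hc1, hc2, sub_self, mul_zero]
    · rw [coeff_eq_zero_of_natDegree_lt (by omega), coeff_eq_zero_of_natDegree_lt (by omega),
        sub_self, mul_zero]
  refine ⟨f, g, ?_, hgd, Or.inr (by rw [leadingCoeff, hgd, hgc]), ?_⟩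
  · rw [← natDegree_map_eq_of_injective hinj, hf]
    refine natDegree_eq_of_le_of_coeff_ne_zero ?_ ?_
    · exact natDegree_add_le_of_degree_le hd1.le hd2.le
    · rw [coeff_add, hc1, hc2]
      norm_num
  · apply map_injective _ hinj
    have hC : C ((tau ψ)⁻¹) ^ 2 * C (((-1) ^ ((q - 1) / 2) * q : ℤ) : L) = 1 := by
      rw [← hτ, ← C_pow, ← C_mul, inv_pow, inv_mul_cancel₀ (pow_ne_zero 2 hτ0), C_1]
    rw [Polynomial.map_mul, Polynomial.map_sub, Polynomial.map_mul, Polynomial.map_pow,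
      Polynomial.map_pow, hf, hg, map_cyclotomic, ← hmul, map_C, eq_intCast]
    have h4 : (4 : ℤ[X]).map (Int.castRingHom L) = 4 := by simp
    rw [h4]
    linear_combination (half ψ 1 - half ψ (-1)) ^ 2 * hC
end

section
/- Let q ≥ 5 be a prime, let ζ be a primitive q-th root of unity in ℂ, let (·/q) denote the Legendre symbol modulo q, set D = (−1)^{(q−1)/2}·q, and let τ = ∑_{m=1}^{q−1} (m/q)·ζ^m be the quadratic Gauss sum (so τ² = D). Define P^+(X) = ∏_{(m/q)=1}(X − ζ^m), P^−(X) = ∏_{(m/q)=−1}(X − ζ^m), and g(X) = (P^+(X) − P^−(X))/τ, a polynomial with integer coefficients of degree (q−3)/2. Then for every integer x with x ≥ q^{3/2}, one has |g(x)| ≤ x^{(q−3)/2} + q^{3/2}·x^{(q−5)/2} ≤ 2·x^{(q−3)/2} < 2·((x^q − 1)/(x − 1))^{(q−3)/(2(q−1))}. -/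
/-!
Write `q = 2d + 1`, so that `P⁺` and `P⁻` both have degree `d`. All roots of both products have
modulus one, so after division by `x ^ d` each of them is `1 - S / x`, with `S` the sum of its
roots, up to an error of at most `(1 + 1/x) ^ d - 1 - d/x ≤ exp (d/x) - 1 - d/x ≤ (d/x) ^ 2`
(`norm_prod_one_sub_linear_le`, `norm_prod_one_sub_sq_le`). The two root sums differ by `τ`, hence
`|g(x)| |τ| ≤ x ^ d (|τ| / x + 2 (d/x) ^ 2)`, and `|τ| = √q` together with `2 d ^ 2 ≤ q ^ 2`
gives the first inequality. The second one is `q ^ (3/2) ≤ x`, and the third follows from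
`x ^ (q - 1) < (x ^ q - 1) / (x - 1)` by taking the power `(q - 3) / (2 (q - 1))`.
-/

/-- The part of `∏ (1 - b i)` of order at least two is dominated by the corresponding part
of `(1 + t) ^ n`, where `t` bounds all `‖b i‖`. -/
lemma norm_prod_one_sub_linear_le {ι : Type*} (s : Finset ι) (b : ι → ℂ) (t : ℝ)
    (ht : 0 ≤ t) (hb : ∀ i ∈ s, ‖b i‖ ≤ t) :
    ‖∏ i ∈ s, (1 - b i) - (1 - ∑ i ∈ s, b i)‖ ≤ (1 + t) ^ s.card - 1 - s.card * t := by
  classical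
  induction s using Finset.induction_on with
  | empty => simp
  | insert a s ha ih =>
    have ih' := ih (fun i hi => hb i (Finset.mem_insert_of_mem hi))
    have hba : ‖b a‖ ≤ t := hb a (Finset.mem_insert_self a s)
    have hsum : ‖∑ i ∈ s, b i‖ ≤ s.card * t := by
      have := norm_sum_le_of_le s (fun i hi => hb i (Finset.mem_insert_of_mem hi))
      simpa using this
    have h1 : ‖1 - b a‖ ≤ 1 + t := by
      have := norm_sub_le (1 : ℂ) (b a)
      rw [norm_one] at this
      linarith
    rw [Finset.prod_insert ha, Finset.sum_insert ha, Finset.card_insert_of_notMem ha]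
    have key : (1 - b a) * ∏ i ∈ s, (1 - b i) - (1 - (b a + ∑ i ∈ s, b i)) =
        (1 - b a) * (∏ i ∈ s, (1 - b i) - (1 - ∑ i ∈ s, b i)) + b a * ∑ i ∈ s, b i := by
      ring
    rw [key]
    calc _ ≤ ‖1 - b a‖ * ‖∏ i ∈ s, (1 - b i) - (1 - ∑ i ∈ s, b i)‖
          + ‖b a‖ * ‖∑ i ∈ s, b i‖ := by
          refine (norm_add_le _ _).trans ?_
          rw [norm_mul, norm_mul]
      _ ≤ (1 + t) * ((1 + t) ^ s.card - 1 - s.card * t) + t * (s.card * t) := by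
          gcongr
      _ = _ := by push_cast; ring

lemma norm_prod_one_sub_sq_le {ι : Type*} (s : Finset ι) (b : ι → ℂ) (t : ℝ)
    (ht : 0 ≤ t) (hb : ∀ i ∈ s, ‖b i‖ ≤ t) (hst : s.card * t ≤ 1) :
    ‖∏ i ∈ s, (1 - b i) - (1 - ∑ i ∈ s, b i)‖ ≤ (s.card * t) ^ 2 := by
  refine (norm_prod_one_sub_linear_le s b t ht hb).trans ?_
  have h0 : 0 ≤ s.card * t := by positivity
  have h1 : (1 + t) ^ s.card ≤ Real.exp (s.card * t) := by
    rw [Real.exp_nat_mul]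
    gcongr
    linarith [Real.add_one_le_exp t]
  have h2 := Real.abs_exp_sub_one_sub_id_le (x := s.card * t) (by rwa [abs_of_nonneg h0])
  linarith [le_abs_self (Real.exp (s.card * t) - 1 - s.card * t)]

/-- A sum against the Legendre symbol splits into residues and non-residues; the term `m = 0`
vanishes. -/
lemma sum_legendre_split (q : ℕ) [Fact q.Prime] (f : ℕ → ℂ) :
    ∑ m ∈ (Finset.range q).filter (fun m : ℕ => legendreSym q (m : ℤ) = 1), f m -
      ∑ m ∈ (Finset.range q).filter (fun m : ℕ => legendreSym q (m : ℤ) = -1), f m =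
    ∑ m ∈ Finset.range q, (legendreSym q (m : ℤ) : ℂ) * f m := by
  rw [Finset.sum_filter, Finset.sum_filter, ← Finset.sum_sub_distrib]
  refine Finset.sum_congr rfl fun m _ => ?_
  by_cases h0 : ((m : ℤ) : ZMod q) = 0
  · simp [(legendreSym.eq_zero_iff q (m : ℤ)).2 h0]
  · rcases legendreSym.eq_one_or_neg_one q h0 with h | h <;> simp [h]

lemma sum_range_legendre (q : ℕ) [Fact q.Prime] (hq : q ≠ 2) :
    ∑ m ∈ Finset.range q, legendreSym q (m : ℤ) = 0 := by
  have h := quadraticChar_sum_zero (F := ZMod q) (by rwa [ZMod.ringChar_zmod_n])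
  rw [← h]
  refine Finset.sum_bij' (fun m _ => (m : ZMod q)) (fun a _ => a.val) ?_ ?_ ?_ ?_ ?_
  · simp
  · intro a _
    simpa using ZMod.val_lt a
  · intro m hm
    exact ZMod.val_cast_of_lt (Finset.mem_range.1 hm)
  · intro a _
    simp
  · intro m _
    simp [legendreSym]

lemma card_legendre (q d : ℕ) [Fact q.Prime] (hd : q = 2 * d + 1) :
    ((Finset.range q).filter (fun m : ℕ => legendreSym q (m : ℤ) = 1)).card = d ∧
      ((Finset.range q).filter (fun m : ℕ => legendreSym q (m : ℤ) = -1)).card = d := by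
  have hdiff := sum_legendre_split q (fun _ => 1)
  have h0 := sum_range_legendre q (by omega)
  have h0' : ∑ m ∈ Finset.range q, (legendreSym q (m : ℤ) : ℂ) = 0 := by exact_mod_cast h0
  simp only [mul_one, h0', Finset.sum_const, nsmul_eq_mul, sub_eq_zero] at hdiff
  have heq : ((Finset.range q).filter (fun m : ℕ => legendreSym q (m : ℤ) = 1)).card =
      ((Finset.range q).filter (fun m : ℕ => legendreSym q (m : ℤ) = -1)).card := by
    exact_mod_cast hdiff
  have hsum : ((Finset.range q).filter (fun m : ℕ => legendreSym q (m : ℤ) = 1)).card +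
      ((Finset.range q).filter (fun m : ℕ => legendreSym q (m : ℤ) = -1)).card = 2 * d := by
    rw [← Finset.card_union_of_disjoint]
    · have : (Finset.range q).filter (fun m : ℕ => legendreSym q (m : ℤ) = 1) ∪
          (Finset.range q).filter (fun m : ℕ => legendreSym q (m : ℤ) = -1) = Finset.Ico 1 q := by
        ext m
        simp only [Finset.mem_union, Finset.mem_filter, Finset.mem_range, Finset.mem_Ico]
        constructor
        · rintro (⟨h1, h2⟩ | ⟨h1, h2⟩) <;> refine ⟨Nat.pos_of_ne_zero ?_, h1⟩ <;> rintro rfl <;>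
            simp at h2
        · rintro ⟨h1, h2⟩
          have hm : ((m : ℤ) : ZMod q) ≠ 0 := by
            rw [Int.cast_natCast, Ne, ZMod.natCast_eq_zero_iff]
            exact fun h => absurd (Nat.le_of_dvd h1 h) (by omega)
          rcases legendreSym.eq_one_or_neg_one q hm with h | h
          · exact Or.inl ⟨h2, h⟩
          · exact Or.inr ⟨h2, h⟩
      rw [this, Nat.card_Ico]
      omega
    · rw [Finset.disjoint_filter]
      intro m _ h
      rw [h]
      decide
  omega

lemma prod_sub_eq {ι : Type*} (s : Finset ι) (a : ι → ℂ) (x : ℂ) (hx : x ≠ 0) :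
    ∏ i ∈ s, (x - a i) = x ^ s.card * ∏ i ∈ s, (1 - a i / x) := by
  rw [← Finset.prod_const, ← Finset.prod_mul_distrib]
  refine Finset.prod_congr rfl fun i _ => ?_
  field_simp

open scoped Classical in
/-- In `(Finset.range q).filter (fun m => legendreSym q (m : ℤ) = c)` with untyped `m` the variable
is an integer, and `Finset.range q` is coerced to `Finset ℤ` through the monad structure of
`Finset`. A product over this set of integers is the product over the natural numbers below `q`
satisfying the same condition. -/
lemma prod_filter_coe_range (q : ℕ) [Fact q.Prime] (c : ℤ) (F : ℤ → Polynomial ℂ) :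
    ∏ m ∈ (Finset.range q).filter (fun m => legendreSym q (m : ℤ) = c), F m =
      ∏ m ∈ (Finset.range q).filter (fun m : ℕ => legendreSym q (m : ℤ) = c), F (m : ℤ) := by
  refine (Finset.prod_bij (fun (m : ℕ) _ => (m : ℤ)) ?_ ?_ ?_ ?_).symm
  · intro m hm
    simpa [Finset.bind_def, Finset.mem_sup] using hm
  · intro a _ b _ hab
    exact_mod_cast hab
  · intro b hb
    simp only [Finset.bind_def, Finset.pure_def, Finset.mem_filter, Finset.mem_sup,
      Finset.mem_singleton] at hb
    obtain ⟨⟨m, hm, rfl⟩, hl⟩ := hb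
    exact ⟨m, Finset.mem_filter.2 ⟨hm, hl⟩, rfl⟩
  · intro m _
    rfl

open scoped Classical in
/-- Bound on `|g(x)|` where `g(X) = (P⁺(X) − P⁻(X))/τ`: for `q ≥ 5` prime and every
integer `x ≥ q^{3/2}`,
`|g(x)| ≤ x^{(q−3)/2} + q^{3/2}·x^{(q−5)/2} ≤ 2·x^{(q−3)/2} <
  2·((x^q−1)/(x−1))^{(q−3)/(2(q−1))}`. -/
theorem sum_of_divisors_stmt11
    (q : ℕ) [Fact q.Prime] (hq5 : 5 ≤ q)
    (ζ : ℂ) (hζ : IsPrimitiveRoot ζ q)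
    (τ : ℂ) (hτ : τ = ∑ m ∈ Finset.Ico 1 q, (legendreSym q (m : ℤ) : ℂ) * ζ ^ m)
    (hτsq : τ ^ 2 = ((-1 : ℂ)) ^ ((q - 1) / 2) * (q : ℂ))
    (g : Polynomial ℤ)
    (hgdeg : g.natDegree = (q - 3) / 2)
    (hg : g.map (Int.castRingHom ℂ) * Polynomial.C τ =
      (∏ m ∈ (Finset.range q).filter (fun m => legendreSym q (m : ℤ) = 1),
        (Polynomial.X - Polynomial.C (ζ ^ m))) -
      (∏ m ∈ (Finset.range q).filter (fun m => legendreSym q (m : ℤ) = -1),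
        (Polynomial.X - Polynomial.C (ζ ^ m))))
    (x : ℤ) (hx : (q : ℝ) ^ ((3 : ℝ) / 2) ≤ (x : ℝ)) :
    |((g.eval x : ℤ) : ℝ)| ≤
        (x : ℝ) ^ ((q - 3) / 2) + (q : ℝ) ^ ((3 : ℝ) / 2) * (x : ℝ) ^ ((q - 5) / 2) ∧
      (x : ℝ) ^ ((q - 3) / 2) + (q : ℝ) ^ ((3 : ℝ) / 2) * (x : ℝ) ^ ((q - 5) / 2) ≤
        2 * (x : ℝ) ^ ((q - 3) / 2) ∧
      2 * (x : ℝ) ^ ((q - 3) / 2) <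
        2 * (((x : ℝ) ^ q - 1) / ((x : ℝ) - 1)) ^
          (((q : ℝ) - 3) / (2 * ((q : ℝ) - 1))) := by
  rw [prod_filter_coe_range, prod_filter_coe_range] at hg
  simp only [zpow_natCast] at hg
  obtain ⟨d, hd⟩ : ∃ d, q = 2 * d + 1 :=
    (Fact.out : q.Prime).odd_of_ne_two (by omega)
  have hd2 : 2 ≤ d := by omega
  obtain ⟨e, rfl⟩ : ∃ e, d = e + 2 := ⟨d - 2, by omega⟩
  have e3 : (q - 3) / 2 = e + 1 := by omega
  have e5 : (q - 5) / 2 = e := by omega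
  rw [e3, e5]
  have hqR : (q : ℝ) = 2 * e + 5 := by rw [hd]; push_cast; ring
  have hq0 : (0 : ℝ) < q := by rw [hqR]; positivity
  have hq1 : (1 : ℝ) < q := by rw [hqR]; linarith [(Nat.cast_nonneg e : (0 : ℝ) ≤ e)]
  have hpow : (q : ℝ) ^ ((3 : ℝ) / 2) = q * √q := by
    rw [Real.sqrt_eq_rpow, show (3 : ℝ) / 2 = 1 + 1 / 2 by norm_num, Real.rpow_add hq0,
      Real.rpow_one]
  have hsq1 : 1 < √(q : ℝ) := Real.lt_sqrt_of_sq_lt (by simpa using hq1)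
  have hsqq : √(q : ℝ) * √(q : ℝ) = q := Real.mul_self_sqrt hq0.le
  have hqx : (q : ℝ) < x := by
    rw [hpow] at hx
    nlinarith
  have hx1 : (1 : ℝ) < x := hq1.trans hqx
  have hx0 : (0 : ℝ) < x := by linarith
  refine ⟨?_, ?_, ?_⟩
  · have hxC : (x : ℂ) ≠ 0 := by
      have : x ≠ 0 := by rintro rfl; simp at hx0
      exact_mod_cast this
    have hnx : ‖(x : ℂ)‖ = x := by
      rw [Complex.norm_intCast, abs_of_pos hx0]
    have hτn : ‖τ‖ = √(q : ℝ) := by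
      have h := congrArg norm hτsq
      rw [norm_pow, norm_mul, norm_pow, norm_neg, norm_one, one_pow, one_mul,
        Complex.norm_natCast] at h
      rw [← h, Real.sqrt_sq (norm_nonneg _)]
    have hζn : ‖ζ‖ = 1 := hζ.norm'_eq_one (by omega)
    obtain ⟨c1, c2⟩ := card_legendre q (e + 2) hd
    set S₁ := (Finset.range q).filter (fun m : ℕ => legendreSym q (m : ℤ) = 1) with hS₁
    set S₂ := (Finset.range q).filter (fun m : ℕ => legendreSym q (m : ℤ) = -1) with hS₂
    have hτ' : ∑ m ∈ S₁, ζ ^ m - ∑ m ∈ S₂, ζ ^ m = τ := by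
      rw [hS₁, hS₂, sum_legendre_split q (fun m => ζ ^ m), hτ, Finset.range_eq_Ico,
        Finset.sum_eq_sum_Ico_succ_bot (by omega)]
      simp
    have hb : ∀ m : ℕ, ‖ζ ^ m / (x : ℂ)‖ ≤ 1 / x := by
      intro m
      rw [norm_div, norm_pow, hζn, one_pow, hnx]
    have hdx : ((e + 2 : ℕ) : ℝ) * (1 / x) ≤ 1 := by
      rw [mul_one_div, div_le_one hx0]
      push_cast
      linarith [(Nat.cast_nonneg e : (0 : ℝ) ≤ e)]
    have E1 := norm_prod_one_sub_sq_le S₁ (fun m => ζ ^ m / (x : ℂ)) (1 / x) (by positivity)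
      (fun m _ => hb m) (by rw [c1]; exact hdx)
    have E2 := norm_prod_one_sub_sq_le S₂ (fun m => ζ ^ m / (x : ℂ)) (1 / x) (by positivity)
      (fun m _ => hb m) (by rw [c2]; exact hdx)
    have hev := congrArg (Polynomial.eval (x : ℂ)) hg
    have hge : Polynomial.eval (x : ℂ) (g.map (Int.castRingHom ℂ)) = ((g.eval x : ℤ) : ℂ) := by
      simp
    simp only [Polynomial.eval_mul, Polynomial.eval_C, Polynomial.eval_sub,
      Polynomial.eval_prod, Polynomial.eval_X, hge] at hev
    rw [prod_sub_eq S₁ _ _ hxC, prod_sub_eq S₂ _ _ hxC, c1, c2] at hev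
    rw [c1] at E1
    rw [c2] at E2
    simp only [← Finset.sum_div] at E1 E2
    set A := ∏ m ∈ S₁, (1 - ζ ^ m / (x : ℂ))
    set B := ∏ m ∈ S₂, (1 - ζ ^ m / (x : ℂ))
    have hAB : A - B = (A - (1 - (∑ m ∈ S₁, ζ ^ m) / (x : ℂ))) -
        (B - (1 - (∑ m ∈ S₂, ζ ^ m) / (x : ℂ))) - τ / x := by
      rw [← hτ']
      ring
    have hABn : ‖A - B‖ ≤ 2 * (((e + 2 : ℕ) : ℝ) * (1 / x)) ^ 2 + √(q : ℝ) / x := by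
      rw [hAB]
      refine (norm_sub_le _ _).trans ?_
      rw [norm_div, hτn, hnx]
      gcongr
      refine (norm_sub_le _ _).trans ?_
      linarith
    have hn := congrArg norm hev
    rw [← mul_sub, norm_mul, norm_mul, norm_pow, hnx, hτn, Complex.norm_intCast] at hn
    refine le_of_mul_le_mul_right ?_ (by linarith : 0 < √(q : ℝ))
    rw [hn, hpow]
    calc (x : ℝ) ^ (e + 2) * ‖A - B‖
        ≤ (x : ℝ) ^ (e + 2) * (2 * (((e + 2 : ℕ) : ℝ) * (1 / x)) ^ 2 + √(q : ℝ) / x) := by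
          gcongr
      _ = (x : ℝ) ^ e * (2 * ((e : ℝ) + 2) ^ 2) + (x : ℝ) ^ (e + 1) * √(q : ℝ) := by
          push_cast
          field_simp
          ring
      _ ≤ (x : ℝ) ^ e * (q * q) + (x : ℝ) ^ (e + 1) * √(q : ℝ) := by
          have h : 2 * ((e : ℝ) + 2) ^ 2 ≤ q * q := by
            rw [hqR]
            nlinarith [(Nat.cast_nonneg e : (0 : ℝ) ≤ e)]
          gcongr
      _ = ((x : ℝ) ^ (e + 1) + q * √(q : ℝ) * (x : ℝ) ^ e) * √(q : ℝ) := by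
          linear_combination -((x : ℝ) ^ e * q) * hsqq
  · have : (q : ℝ) ^ ((3 : ℝ) / 2) * (x : ℝ) ^ e ≤ x * (x : ℝ) ^ e := by gcongr
    rw [pow_succ]
    linarith
  · have hlt : (x : ℝ) ^ (q - 1) < ((x : ℝ) ^ q - 1) / ((x : ℝ) - 1) := by
      rw [lt_div_iff₀ (by linarith)]
      have h1 : 1 < (x : ℝ) ^ (q - 1) := one_lt_pow₀ hx1 (by omega)
      have h2 : (x : ℝ) ^ q = (x : ℝ) ^ (q - 1) * x := by
        rw [← pow_succ]
        congr 1
        omega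
      rw [h2]
      linarith
    have hexp : 0 < ((q : ℝ) - 3) / (2 * ((q : ℝ) - 1)) := by
      rw [hqR]
      have := (Nat.cast_nonneg e : (0 : ℝ) ≤ e)
      apply div_pos <;> linarith
    have heq : (x : ℝ) ^ (e + 1) =
        ((x : ℝ) ^ (q - 1)) ^ (((q : ℝ) - 3) / (2 * ((q : ℝ) - 1))) := by
      rw [← Real.rpow_natCast, ← Real.rpow_natCast, ← Real.rpow_mul hx0.le]
      congr 1
      rw [Nat.cast_sub (by omega)]
      have : (q : ℝ) - 1 ≠ 0 := by linarith
      push_cast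
      field_simp
      rw [hqR]
      ring
    rw [heq]
    have := Real.rpow_lt_rpow (by positivity) hlt hexp
    linarith
end

section
/- Let q be an odd prime, set D = (−1)^{(q−1)/2}·q, and let K = ℚ(√D) with ring of integers O_K. Let ζ be a primitive q-th root of unity, let (·/q) denote the Legendre symbol modulo q, and put P^+(X) = ∏_{(m/q)=1}(X − ζ^m) and P^−(X) = ∏_{(m/q)=−1}(X − ζ^m); for any integer x, the values P^+(x) and P^−(x) lie in O_K. Then for every integer x, any prime ideal 𝔭 of O_K that divides both the principal ideal generated by P^+(x) and the principal ideal generated by P^−(x) must divide the principal ideal of O_K generated by √D (equivalently, 𝔭 lies above the rational prime q). -/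
/-!
Write `A = P⁺(x)` and `B = P⁻(x)`, and let `R` be the ring of algebraic integers in `ℂ`. The embedding
`φ` makes `R` an integral extension of `𝓞 K`, so some prime `Q` of `R` lies over `P`. Since `A, B ∈ Q`,
the prime `Q` contains a factor `x - ζ ^ a` of `A` and a factor `x - ζ ^ b` of `B`, where `a ≠ b` modulo
`q`. Hence `ζ ^ a = ζ ^ b` in the domain `R ⧸ Q`, and as `ζ ^ q = 1` with `q` prime, this forces
`ζ = 1` there. The identity `∏_{0 < k < q} (1 - ζ ^ k) = q` then gives `q ∈ Q`, so `q ∈ P`;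
as `δ ^ 2 = ± q`, also `δ ∈ P`.
-/

/-- A root of unity of prime exponent `q` with two equal powers of distinct exponents below `q`
is trivial. -/
lemma eq_one_of_pow_eq_pow_of_prime {M : Type*} [Monoid M] {q : ℕ} (hq : q.Prime) {z : M}
    (hz : z ^ q = 1) {a b : ℕ} (ha : a < q) (hb : b < q) (hab : a ≠ b) (h : z ^ a = z ^ b) :
    z = 1 := by
  have := Fact.mk hq
  by_contra hne
  have ho : orderOf z = q := orderOf_eq_prime hz hne
  exact hab (pow_injOn_Iio_orderOf (by simpa [ho] using ha) (by simpa [ho] using hb) h)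

/-- If a prime ideal `Q` contains two products of `x - ζ ^ m` over disjoint sets of
exponents below the prime `q`, then it contains `q`. -/
lemma natCast_mem_of_prod_mem {R : Type*} [CommRing R] [IsDomain R] {q : ℕ} (hq : q.Prime)
    {ζ : R} (hζ : IsPrimitiveRoot ζ q) (x : R) (Q : Ideal R) [Q.IsPrime] {S T : Finset ℕ}
    (hS : ∀ m ∈ S, m < q) (hT : ∀ m ∈ T, m < q) (hST : Disjoint S T)
    (hA : ∏ m ∈ S, (x - ζ ^ m) ∈ Q) (hB : ∏ m ∈ T, (x - ζ ^ m) ∈ Q) : (q : R) ∈ Q := by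
  obtain ⟨a, ha, haQ⟩ := (Ideal.IsPrime.prod_mem_iff (p := Q)).1 hA
  obtain ⟨b, hb, hbQ⟩ := (Ideal.IsPrime.prod_mem_iff (p := Q)).1 hB
  have hab : a ≠ b := fun h => Finset.disjoint_left.1 hST ha (h ▸ hb)
  have hpow : (Ideal.Quotient.mk Q ζ) ^ a = (Ideal.Quotient.mk Q ζ) ^ b := by
    rw [← map_pow, ← map_pow, Ideal.Quotient.eq]
    have := Q.sub_mem hbQ haQ
    rwa [sub_sub_sub_cancel_left] at this
  have h1 : Ideal.Quotient.mk Q ζ = 1 :=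
    eq_one_of_pow_eq_pow_of_prime hq (by rw [← map_pow, hζ.pow_eq_one, map_one])
      (hS a ha) (hT b hb) hab hpow
  obtain ⟨n, rfl⟩ : ∃ n, q = n + 1 := ⟨q - 1, by have := hq.pos; omega⟩
  have hprod := hζ.prod_one_sub_pow_eq_order
  have hn : n ≠ 0 := by rintro rfl; exact Nat.not_prime_one hq
  rw [← Ideal.Quotient.eq_zero_iff_mem, Nat.cast_add, Nat.cast_one, ← hprod, map_prod]
  exact Finset.prod_eq_zero (Finset.mem_range.2 (Nat.pos_of_ne_zero hn)) (by simp [h1])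

open scoped Classical in
/-- The coercion of `Finset.range q` to a finset of integers, given by the monad structure on
`Finset`, is the image under the cast, so a product over it is a product over natural numbers. -/
lemma prod_filter_coe_range_s12 {M : Type*} [CommMonoid M] (q : ℕ) (p : ℤ → Prop) [DecidablePred p]
    (g : ℤ → M) :
    ∏ m ∈ Finset.filter p (do let a ← Finset.range q; pure (a : ℤ)), g m =
      ∏ m ∈ (Finset.range q).filter (fun m : ℕ => p (m : ℤ)), g (m : ℤ) := by
  have h : (do let a ← Finset.range q; pure (a : ℤ) : Finset ℤ) =
      (Finset.range q).image (fun a : ℕ => (a : ℤ)) := by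
    ext m
    simp [Finset.bind_def, Finset.pure_def, eq_comm]
  rw [h, Finset.filter_image, Finset.prod_image]
  exact fun a _ b _ hab => Nat.cast_injective hab

open scoped Classical in
/-- Any prime ideal of the ring of integers of `K = ℚ(√D)`, `D = (−1)^{(q−1)/2}·q`,
dividing both `(P⁺(x))` and `(P⁻(x))` divides `(√D)`. -/
theorem sum_of_divisors_stmt12
    (q : ℕ) [Fact q.Prime] (hodd : Odd q)
    (D : ℤ) (hD : D = (-1 : ℤ) ^ ((q - 1) / 2) * (q : ℤ))
    (K : Type*) [Field K] [NumberField K]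
    (φ : K →+* ℂ)
    (sqrtD : K) (hsqrtD : sqrtD ^ 2 = (D : K))
    (hdeg : Module.finrank ℚ K = 2)
    (ζ : ℂ) (hζ : IsPrimitiveRoot ζ q)
    (x : ℤ)
    (α β δ : NumberField.RingOfIntegers K)
    (hα : φ (α : K) = ∏ m ∈ (Finset.range q).filter (fun m => legendreSym q (m : ℤ) = 1),
      ((x : ℂ) - ζ ^ m))
    (hβ : φ (β : K) = ∏ m ∈ (Finset.range q).filter (fun m => legendreSym q (m : ℤ) = -1),
      ((x : ℂ) - ζ ^ m))
    (hδ : (δ : K) = sqrtD)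
    (P : Ideal (NumberField.RingOfIntegers K)) (hP : P.IsPrime) (hP0 : P ≠ ⊥)
    (hPα : P ∣ Ideal.span {α}) (hPβ : P ∣ Ideal.span {β}) :
    P ∣ Ideal.span {δ} := by
  -- In `hα` and `hβ` the index `m` is an integer and `ζ ^ m` an integer power.
  rw [prod_filter_coe_range_s12] at hα hβ
  simp only [zpow_natCast] at hα hβ
  have hq : q.Prime := Fact.out
  rw [Ideal.dvd_span_singleton] at hPα hPβ ⊢
  let f : NumberField.RingOfIntegers K →+* integralClosure ℤ ℂ :=
    (φ.comp (algebraMap (NumberField.RingOfIntegers K) K)).codRestrict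
      (integralClosure ℤ ℂ) (fun y => (NumberField.RingOfIntegers.isIntegral_coe y).map φ.toIntAlgHom)
  have hf : ∀ y, (f y : ℂ) = φ (y : K) := fun y => rfl
  have hfinj : Function.Injective f := fun y z h => by
    have h' : φ (y : K) = φ (z : K) := by rw [← hf, ← hf, h]
    exact NumberField.RingOfIntegers.ext (φ.injective h')
  let := f.toAlgebra
  have : Algebra.IsIntegral (NumberField.RingOfIntegers K) (integralClosure ℤ ℂ) :=
    Algebra.IsIntegral.tower_top ℤ
  obtain ⟨Q, hQ, hQP⟩ := Ideal.exists_ideal_over_prime_of_isIntegral_of_isDomain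
    (S := integralClosure ℤ ℂ) P
    (by
      change RingHom.ker f ≤ P
      rw [(RingHom.injective_iff_ker_eq_bot f).1 hfinj]
      exact bot_le)
  have hmem : ∀ y, y ∈ P ↔ f y ∈ Q := fun y => by rw [← hQP]; rfl
  let z : integralClosure ℤ ℂ := ⟨ζ, hζ.isIntegral hq.pos⟩
  have hz : IsPrimitiveRoot z q :=
    IsPrimitiveRoot.of_map_of_injective (f := (integralClosure ℤ ℂ).val) hζ Subtype.val_injective
  have hfα : f α = ∏ m ∈ (Finset.range q).filter (fun m : ℕ => legendreSym q (m : ℤ) = 1),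
      ((x : integralClosure ℤ ℂ) - z ^ m) := by
    apply Subtype.val_injective
    rw [hf, hα]
    push_cast
    rfl
  have hfβ : f β = ∏ m ∈ (Finset.range q).filter (fun m : ℕ => legendreSym q (m : ℤ) = -1),
      ((x : integralClosure ℤ ℂ) - z ^ m) := by
    apply Subtype.val_injective
    rw [hf, hβ]
    push_cast
    rfl
  have hqQ : (q : integralClosure ℤ ℂ) ∈ Q := by
    refine natCast_mem_of_prod_mem hq hz (x : integralClosure ℤ ℂ) Q
      (fun m hm => Finset.mem_range.1 (Finset.mem_filter.1 hm).1)
      (fun m hm => Finset.mem_range.1 (Finset.mem_filter.1 hm).1) ?_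
      (hfα ▸ (hmem α).1 hPα) (hfβ ▸ (hmem β).1 hPβ)
    refine Finset.disjoint_filter.2 fun m _ h1 h2 => ?_
    rw [h1] at h2
    exact absurd h2 (by decide)
  have hqP : (q : NumberField.RingOfIntegers K) ∈ P := by rwa [hmem, map_natCast]
  have hδ2 : δ ^ 2 = (-1) ^ ((q - 1) / 2) * (q : NumberField.RingOfIntegers K) := by
    apply NumberField.RingOfIntegers.ext
    have h : (δ : K) ^ 2 = (-1) ^ ((q - 1) / 2) * (q : K) := by
      rw [hδ, hsqrtD, hD]
      push_cast
      rfl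
    simpa using h
  exact hP.mem_of_pow_mem 2 (hδ2 ▸ P.mul_mem_left _ hqP)
end
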